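/- Let (Ω, 𝒜, μ) be a measure space, p ∈ [1,∞), and T a positive C₀-semigroup on L_p(μ) with generator A. If V : Ω → [0,∞] is T-admissible, then the strong limit s-lim_{n→∞} T_{V − V∧n} always exists and equals (T_V)_{−V}, the C₀-semigroup obtained from T_V by applying −V as a perturbation. -/

import Mathlib

open MeasureTheory Filter Topology ENNReal

noncomputable section

namespace Absorption

variable {E : Type*} [NormedAddCommGroup E] [NormedSpace ℝ E]

/-- A one-parameter semigroup of bounded operators (for nonnegative times). -/
def IsSemigroup (T : ℝ → E →L[ℝ] E) : Prop :=
  T 0 = ContinuousLinearMap.id ℝ E ∧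
    ∀ s t : ℝ, 0 ≤ s → 0 ≤ t → T (s + t) = (T s).comp (T t)

/-- A `C₀`-semigroup: a one-parameter semigroup which is strongly continuous on `[0, ∞)`. -/
def IsC0Semigroup (T : ℝ → E →L[ℝ] E) : Prop :=
  IsSemigroup T ∧ ∀ f : E, ContinuousOn (fun t => T t f) (Set.Ici (0 : ℝ))

/-- `(f, g)` belongs to the graph of the generator of the semigroup `T`. -/
def InGenerator (T : ℝ → E →L[ℝ] E) (f g : E) : Prop :=
  Tendsto (fun t : ℝ => t⁻¹ • (T t f - f)) (𝓝[>] (0 : ℝ)) (𝓝 g)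

variable {Ω : Type*} [MeasurableSpace Ω]

/-- A function into a measurable space is *locally measurable* (w.r.t. `μ`) if on every set of
finite measure it coincides a.e. with a measurable function. -/
def LocallyMeasurable {α : Type*} [MeasurableSpace α] (μ : Measure Ω) (V : Ω → α) : Prop :=
  ∀ B : Set Ω, MeasurableSet B → μ B < ∞ →
    ∃ g : Ω → α, Measurable g ∧ ∀ᵐ ω ∂(μ.restrict B), V ω = g ω

/-- A set is a local `μ`-null set if its intersection with every measurable set of finite
measure is null. -/
def IsLocalNullSet (μ : Measure Ω) (N : Set Ω) : Prop :=
  ∀ B : Set Ω, MeasurableSet B → μ B < ∞ → μ (N ∩ B) = 0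

/-- Positivity of a family of operators on `L_p` (for positive times). -/
def IsPositiveSG {p : ℝ≥0∞} {μ : Measure Ω} [Fact (1 ≤ p)]
    (T : ℝ → Lp ℝ p μ →L[ℝ] Lp ℝ p μ) : Prop :=
  ∀ t : ℝ, 0 ≤ t → ∀ f : Lp ℝ p μ, 0 ≤ f → 0 ≤ T t f

/-- A band projection on the Banach lattice `L_p(μ)`: an idempotent operator `P`
with `0 ≤ P f ≤ f` for all `f ≥ 0`. -/
def IsBandProjection {p : ℝ≥0∞} {μ : Measure Ω} [Fact (1 ≤ p)]
    (P : Lp ℝ p μ →L[ℝ] Lp ℝ p μ) : Prop :=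
  P.comp P = P ∧ ∀ f : Lp ℝ p μ, 0 ≤ f → 0 ≤ P f ∧ P f ≤ f

/-- `S = (e^{t(A−W)})_{t ≥ 0}`: `S` is the `C₀`-semigroup whose generator is `A - W`,
where `A` is the generator of `T` and the bounded function `W` acts by multiplication. -/
def IsPerturbedSG (μ : Measure Ω) (p : ℝ≥0∞) [Fact (1 ≤ p)]
    (T S : ℝ → Lp ℝ p μ →L[ℝ] Lp ℝ p μ) (W : Ω → ℝ) : Prop :=
  IsC0Semigroup S ∧
    ∀ f g : Lp ℝ p μ, InGenerator S f g ↔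
      ∃ g₀ : Lp ℝ p μ, InGenerator T f g₀ ∧
        ⇑g =ᵐ[μ] fun ω => g₀ ω - W ω * f ω

/-- Same as `IsPerturbedSG`, for semigroups acting on a subspace `F` of `L_p(μ)`. -/
def IsPerturbedSGSub (μ : Measure Ω) (p : ℝ≥0∞) [Fact (1 ≤ p)] (F : Submodule ℝ (Lp ℝ p μ))
    (T S : ℝ → F →L[ℝ] F) (W : Ω → ℝ) : Prop :=
  IsC0Semigroup S ∧
    ∀ f g : F, InGenerator S f g ↔
      ∃ g₀ : F, InGenerator T f g₀ ∧
        ⇑(g : Lp ℝ p μ) =ᵐ[μ] fun ω => (g₀ : Lp ℝ p μ) ω - W ω * (f : Lp ℝ p μ) ω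

/-- The truncation `V ∧ n` of `V : Ω → [0,∞]`, as a real-valued function. -/
def trunc (V : Ω → ℝ≥0∞) (n : ℕ) : Ω → ℝ := fun ω => (min (V ω) (n : ℝ≥0∞)).toReal

/-- The scalar multiple `ε V` of an absorption rate `V : Ω → [0,∞]`. -/
def smulRate (ε : ℝ) (V : Ω → ℝ≥0∞) : Ω → ℝ≥0∞ := fun ω => ENNReal.ofReal ε * V ω

/-- The absorption rate `V - V ∧ n` (with value `∞` wherever `V = ∞`). -/
def resid (V : Ω → ℝ≥0∞) (n : ℕ) : Ω → ℝ≥0∞ := fun ω => V ω - min (V ω) (n : ℝ≥0∞)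

/-- `TV` is the absorption semigroup `T_V` associated with the rate `V : Ω → [0,∞]`, i.e.
the strong limit `T_V(t) = s-lim_{n→∞} e^{t(A - V∧n)}` (for `t ≥ 0`). -/
def IsAbsorptionSG (μ : Measure Ω) (p : ℝ≥0∞) [Fact (1 ≤ p)]
    (T : ℝ → Lp ℝ p μ →L[ℝ] Lp ℝ p μ) (V : Ω → ℝ≥0∞)
    (TV : ℝ → Lp ℝ p μ →L[ℝ] Lp ℝ p μ) : Prop :=
  ∃ S : ℕ → ℝ → Lp ℝ p μ →L[ℝ] Lp ℝ p μ,
    (∀ n, IsPerturbedSG μ p T (S n) (trunc V n)) ∧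
    ∀ t : ℝ, 0 ≤ t → ∀ f, Tendsto (fun n => S n t f) atTop (𝓝 (TV t f))

/-- `V : Ω → [0,∞]` is `T`-admissible: `V` is locally measurable, the strong limits
`T_V(t) = s-lim_{n→∞} e^{t(A - V∧n)}` exist, and `T_V` is a `C₀`-semigroup. -/
def Admissible (μ : Measure Ω) (p : ℝ≥0∞) [Fact (1 ≤ p)]
    (T : ℝ → Lp ℝ p μ →L[ℝ] Lp ℝ p μ) (V : Ω → ℝ≥0∞) : Prop :=
  LocallyMeasurable μ V ∧
  ∃ TV, IsAbsorptionSG μ p T V TV ∧ IsC0Semigroup TV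

/-- The truncation `(V ∧ n) ∨ (−n)` of an extended-real-valued rate, as a real function. -/
def truncE (V : Ω → EReal) (n : ℕ) : Ω → ℝ :=
  fun ω => (max (min (V ω) (n : EReal)) (-(n : EReal))).toReal

/-- `TV` is the absorption semigroup `T_V` of an extended-real-valued rate `V`:
`T_V(t) = s-lim_{n→∞} e^{t(A - (V∧n)∨(−n))}` (for `t ≥ 0`). -/
def IsAbsorptionSGE (μ : Measure Ω) (p : ℝ≥0∞) [Fact (1 ≤ p)]
    (T : ℝ → Lp ℝ p μ →L[ℝ] Lp ℝ p μ) (V : Ω → EReal)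
    (TV : ℝ → Lp ℝ p μ →L[ℝ] Lp ℝ p μ) : Prop :=
  ∃ S : ℕ → ℝ → Lp ℝ p μ →L[ℝ] Lp ℝ p μ,
    (∀ n, IsPerturbedSG μ p T (S n) (truncE V n)) ∧
    ∀ t : ℝ, 0 ≤ t → ∀ f, Tendsto (fun n => S n t f) atTop (𝓝 (TV t f))

/-- `T`-admissibility for an extended-real-valued absorption rate `V`. -/
def AdmissibleE (μ : Measure Ω) (p : ℝ≥0∞) [Fact (1 ≤ p)]
    (T : ℝ → Lp ℝ p μ →L[ℝ] Lp ℝ p μ) (V : Ω → EReal) : Prop :=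
  LocallyMeasurable μ V ∧
  ∃ TV, IsAbsorptionSGE μ p T V TV ∧ IsC0Semigroup TV

end Absorption

open Absorption

/-!
Write `A` for the generator of `T`. For fixed `n`, the semigroup `T_{V - V∧n}` is the strong limit
as `m → ∞` of `e^{t(A - (V - V∧n)∧m)}`, and `T_V` is that of `e^{t(A - V∧(m+n))}`. The generators
differ by `V∧(m+n) - (V - V∧n)∧m = V∧n`, which does not depend on `m`; hence Duhamel's formula
passes to the limit and shows that `T_{V - V∧n}` is generated by `A_V + V∧n`. So the sequences
`T_{V - V∧n}` and `e^{t(A_V + V∧n)}` are the same, and it remains to prove that this sequence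
converges. It increases with `n` and lies between `T_V` and `T`: order continuity of the `L_p` norm
gives a strong limit, and the squeeze between two `C₀`-semigroups gives its strong continuity.
-/

namespace Absorption

section Semigroups

variable {E : Type*} [NormedAddCommGroup E] [NormedSpace ℝ E] {P Q T S : ℝ → E →L[ℝ] E}
  {B C : E →L[ℝ] E} {f g g' : E}

/-- Convergence of operator families in the strong operator topology, at every time `t ≥ 0`. -/
def TendstoStrongly (G : ℕ → ℝ → E →L[ℝ] E) (H : ℝ → E →L[ℝ] E) : Prop :=
  ∀ t : ℝ, 0 ≤ t → ∀ f : E, Tendsto (fun n => G n t f) atTop (𝓝 (H t f))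

/-- For every `τ`, the operators `G n t` are bounded uniformly in `n` and in `t ∈ [0, τ]`. -/
def UniformlyLocallyBounded (G : ℕ → ℝ → E →L[ℝ] E) : Prop :=
  ∀ τ : ℝ, ∃ M : ℝ, ∀ n, ∀ t ∈ Set.Icc 0 τ, ‖G n t‖ ≤ M

theorem tendsto_apply_of_pointwise [CompleteSpace E] {F : Type*} [NormedAddCommGroup F]
    [NormedSpace ℝ F] {G : ℕ → E →L[ℝ] F} {H : E →L[ℝ] F}
    (hG : ∀ f, Tendsto (fun n => G n f) atTop (𝓝 (H f))) {u : ℕ → E} {x : E}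
    (hu : Tendsto u atTop (𝓝 x)) : Tendsto (fun n => G n (u n)) atTop (𝓝 (H x)) := by
  obtain ⟨M, hM⟩ : ∃ M, ∀ n, ‖G n‖ ≤ M := banach_steinhaus fun f =>
    (hG f).norm.bddAbove_range.imp fun _ hC n => hC ⟨n, rfl⟩
  have hdiff : Tendsto (fun n => G n (u n - x)) atTop (𝓝 0) := by
    refine squeeze_zero_norm (fun n => (G n).le_of_opNorm_le (hM n) _) ?_
    simpa using (tendsto_iff_norm_sub_tendsto_zero.1 hu).const_mul M
  simpa using hdiff.add (hG x)

theorem IsSemigroup.apply_add (hT : IsSemigroup T) {s t : ℝ} (hs : 0 ≤ s) (ht : 0 ≤ t) (f : E) :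
    T (s + t) f = T s (T t f) := by
  rw [hT.2 s t hs ht, ContinuousLinearMap.comp_apply]

theorem IsSemigroup.apply_zero (hT : IsSemigroup T) (f : E) : T 0 f = f := by
  rw [hT.1, ContinuousLinearMap.id_apply]

theorem IsSemigroup.of_tendstoStrongly [CompleteSpace E] {G : ℕ → ℝ → E →L[ℝ] E}
    (hG : ∀ n, IsSemigroup (G n)) (hGT : TendstoStrongly G T) : IsSemigroup T := by
  refine ⟨ContinuousLinearMap.ext fun f => ?_, fun s t hs ht => ContinuousLinearMap.ext fun f => ?_⟩
  · refine tendsto_nhds_unique (hGT 0 le_rfl f) ?_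
    simp [(hG _).apply_zero]
  · refine tendsto_nhds_unique (hGT (s + t) (add_nonneg hs ht) f) ?_
    rw [ContinuousLinearMap.comp_apply]
    simpa only [(hG _).apply_add hs ht] using tendsto_apply_of_pointwise (hGT s hs) (hGT t ht f)

theorem IsC0Semigroup.exists_norm_le [CompleteSpace E] (hT : IsC0Semigroup T) (τ : ℝ) :
    ∃ M : ℝ, ∀ t ∈ Set.Icc 0 τ, ‖T t‖ ≤ M := by
  obtain ⟨M, hM⟩ := banach_steinhaus (g := fun t : Set.Icc (0 : ℝ) τ => T t) fun f => by
    obtain ⟨C, hC⟩ := isCompact_Icc.exists_bound_of_continuousOn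
      ((hT.2 f).mono fun _ (ht : _ ∈ Set.Icc 0 τ) => ht.1)
    exact ⟨C, fun t => hC t t.2⟩
  exact ⟨M, fun t ht => hM ⟨t, ht⟩⟩

theorem IsC0Semigroup.continuousOn_uncurry [CompleteSpace E] (hT : IsC0Semigroup T) :
    ContinuousOn (fun x : ℝ × E => T x.1 x.2) (Set.Ici 0 ×ˢ Set.univ) := by
  rintro ⟨t, f⟩ ⟨ht, -⟩
  obtain ⟨M, hM⟩ := hT.exists_norm_le (t + 1)
  have hfst : Tendsto Prod.fst (𝓝[Set.Ici 0 ×ˢ Set.univ] (t, f)) (𝓝[Set.Ici 0] t) :=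
    continuous_fst.continuousWithinAt.tendsto_nhdsWithin fun x hx => hx.1
  have hsnd : Tendsto Prod.snd (𝓝[Set.Ici 0 ×ˢ Set.univ] (t, f)) (𝓝 f) :=
    continuous_snd.continuousWithinAt
  have hdiff : Tendsto (fun x : ℝ × E => T x.1 (x.2 - f)) (𝓝[Set.Ici 0 ×ˢ Set.univ] (t, f))
      (𝓝 0) := by
    refine squeeze_zero_norm' (a := fun x => M * ‖x.2 - f‖) ?_ ?_
    · filter_upwards [hfst self_mem_nhdsWithin,
        hfst (mem_nhdsWithin_of_mem_nhds (Iic_mem_nhds (lt_add_one t)))] with x hx hx'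
      exact (T x.1).le_of_opNorm_le (hM _ ⟨hx, hx'⟩) _
    · simpa using (tendsto_iff_norm_sub_tendsto_zero.1 hsnd).const_mul M
  simpa [ContinuousWithinAt] using hdiff.add ((hT.2 f t ht).tendsto.comp hfst)

theorem IsSemigroup.isC0Semigroup (hT : IsSemigroup T)
    (hbdd : ∀ τ, ∃ M : ℝ, ∀ t ∈ Set.Icc 0 τ, ‖T t‖ ≤ M)
    (hzero : ∀ f, Tendsto (fun t => T t f) (𝓝[≥] 0) (𝓝 f)) : IsC0Semigroup T := by
  refine ⟨hT, fun f t (ht : 0 ≤ t) => ?_⟩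
  obtain ⟨M, hM⟩ := hbdd (t + 1)
  have norm_sub_le : ∀ a b, 0 ≤ a → a ≤ b → b ≤ t + 1 →
      ‖T b f - T a f‖ ≤ M * ‖T (b - a) f - f‖ := fun a b ha hab hb => by
    have hb_eq : T b f = T a (T (b - a) f) := by
      rw [← hT.apply_add ha (sub_nonneg.2 hab), add_sub_cancel]
    rw [hb_eq, ← map_sub]
    exact (T a).le_of_opNorm_le (hM a ⟨ha, hab.trans hb⟩) _
  have hbound : Tendsto (fun s => M * ‖T |s - t| f - f‖) (𝓝[Set.Ici 0] t) (𝓝 0) := by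
    have habs : Tendsto (fun s : ℝ => |s - t|) (𝓝[Set.Ici 0] t) (𝓝[≥] 0) := by
      refine tendsto_nhdsWithin_iff.2 ⟨?_, Eventually.of_forall fun s => abs_nonneg (s - t)⟩
      have : Continuous fun s : ℝ => |s - t| := by fun_prop
      simpa using (this.tendsto t).mono_left nhdsWithin_le_nhds
    simpa using (tendsto_iff_norm_sub_tendsto_zero.1 ((hzero f).comp habs)).const_mul M
  refine tendsto_iff_norm_sub_tendsto_zero.2 (squeeze_zero' (.of_forall fun _ => norm_nonneg _)
    ?_ hbound)
  filter_upwards [self_mem_nhdsWithin, mem_nhdsWithin_of_mem_nhds (Iic_mem_nhds (lt_add_one t))]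
    with s (hs : 0 ≤ s) (hst : s ≤ t + 1)
  rcases le_total s t with h | h
  · rw [norm_sub_rev, abs_sub_comm, abs_of_nonneg (sub_nonneg.2 h)]
    exact norm_sub_le s t hs h (by linarith)
  · rw [abs_of_nonneg (sub_nonneg.2 h)]
    exact norm_sub_le t s ht h hst

/-- The convolution `(P * u)(t) = ∫₀ᵗ P(t - s) u(s) ds` of an operator family with an `E`-valued
function. -/
def convolve (P : ℝ → E →L[ℝ] E) (u : ℝ → E) (t : ℝ) : E :=
  ∫ s in (0 : ℝ)..t, P (t - s) (u s)

theorem IsC0Semigroup.continuousOn_apply_sub [CompleteSpace E] (hP : IsC0Semigroup P) {u : ℝ → E}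
    {t : ℝ} (hu : ContinuousOn u (Set.Icc 0 t)) :
    ContinuousOn (fun s => P (t - s) (u s)) (Set.Icc 0 t) :=
  hP.continuousOn_uncurry.comp ((continuousOn_const.sub continuousOn_id).prodMk hu)
    fun _ hs => ⟨sub_nonneg.2 hs.2, trivial⟩

theorem IsC0Semigroup.intervalIntegrable_apply_sub [CompleteSpace E] (hP : IsC0Semigroup P)
    {u : ℝ → E} {t : ℝ} (ht : 0 ≤ t) (hu : ContinuousOn u (Set.Icc 0 t)) :
    IntervalIntegrable (fun s => P (t - s) (u s)) volume 0 t :=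
  (hP.continuousOn_apply_sub hu).intervalIntegrable_of_Icc ht

theorem IsC0Semigroup.tendsto_inv_smul_convolve [CompleteSpace E] (hP : IsC0Semigroup P)
    {u : ℝ → E} (hu : ContinuousOn u (Set.Ici 0)) :
    Tendsto (fun t : ℝ => t⁻¹ • convolve P u t) (𝓝[>] 0) (𝓝 (u 0)) := by
  have hcont : ContinuousWithinAt (fun x : ℝ × ℝ => P x.1 (u x.2)) (Set.Ici 0 ×ˢ Set.Ici 0)
      (0, 0) :=
    hP.continuousOn_uncurry.comp (continuousOn_fst.prodMk
      (hu.comp continuousOn_snd fun x hx => hx.2)) (fun x hx => ⟨hx.1, trivial⟩) (0, 0)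
      ⟨Set.self_mem_Ici, Set.self_mem_Ici⟩
  rw [Metric.tendsto_nhds]
  intro ε hε
  obtain ⟨δ, hδ, hclose⟩ := Metric.continuousWithinAt_iff.1 hcont (ε / 2) (half_pos hε)
  filter_upwards [Ioo_mem_nhdsGT hδ] with t ht
  have hint := hP.intervalIntegrable_apply_sub ht.1.le (hu.mono Set.Icc_subset_Ici_self)
  have hmean : t⁻¹ • convolve P u t - u 0 = t⁻¹ • ∫ s in (0 : ℝ)..t, (P (t - s) (u s) - u 0) := by
    rw [intervalIntegral.integral_sub hint intervalIntegrable_const,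
      intervalIntegral.integral_const, smul_sub, sub_zero, inv_smul_smul₀ ht.1.ne', convolve]
  have hbound : ‖∫ s in (0 : ℝ)..t, (P (t - s) (u s) - u 0)‖ ≤ ε / 2 * |t - 0| := by
    refine intervalIntegral.norm_integral_le_of_norm_le_const fun s hs => ?_
    rw [Set.uIoc_of_le ht.1.le] at hs
    have hts : |t - s| < δ := abs_sub_lt_iff.2 ⟨by linarith [hs.1, ht.2], by linarith [hs.2]⟩
    have hs' : |s| < δ := abs_lt.2 ⟨by linarith [hs.1], hs.2.trans_lt ht.2⟩
    simpa [dist_eq_norm, hP.1.apply_zero] using (hclose (x := (t - s, s))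
      ⟨sub_nonneg.2 hs.2, hs.1.le⟩ (by simpa [Prod.dist_eq] using ⟨hts, hs'⟩)).le
  rw [dist_eq_norm, hmean, norm_smul, norm_inv, Real.norm_of_nonneg ht.1.le,
    inv_mul_lt_iff₀ ht.1]
  rw [sub_zero, abs_of_pos ht.1] at hbound
  nlinarith [mul_pos hε ht.1]

theorem tendsto_convolve [CompleteSpace E] {G : ℕ → ℝ → E →L[ℝ] E} (hG : ∀ n, IsC0Semigroup (G n))
    (hbdd : UniformlyLocallyBounded G) (hGP : TendstoStrongly G P) {t K : ℝ} (ht : 0 ≤ t)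
    {v : ℕ → ℝ → E} {u : ℝ → E} (hv : ∀ n, ContinuousOn (v n) (Set.Icc 0 t))
    (hK : ∀ n, ∀ s ∈ Set.Icc 0 t, ‖v n s‖ ≤ K)
    (hvu : ∀ s ∈ Set.Icc 0 t, Tendsto (fun n => v n s) atTop (𝓝 (u s))) :
    Tendsto (fun n => convolve (G n) (v n) t) atTop (𝓝 (convolve P u t)) := by
  obtain ⟨M, hM⟩ := hbdd t
  have hsub : Set.uIoc 0 t ⊆ Set.Icc 0 t := Set.uIoc_of_le ht ▸ Set.Ioc_subset_Icc_self
  refine intervalIntegral.tendsto_integral_filter_of_dominated_convergence (fun _ => M * K)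
    (.of_forall fun n => ?_) (.of_forall fun n => .of_forall fun s hs => ?_)
    intervalIntegrable_const (.of_forall fun s hs => ?_)
  · exact (((hG n).continuousOn_apply_sub (hv n)).mono hsub).aestronglyMeasurable
      measurableSet_uIoc
  · have hs := hsub hs
    exact (G n (t - s)).le_of_opNorm_le_of_le
      (hM n _ ⟨sub_nonneg.2 hs.2, sub_le_self t hs.1⟩) (hK n s hs)
  · have hs := hsub hs
    exact tendsto_apply_of_pointwise (hGP _ (sub_nonneg.2 hs.2)) (hvu s hs)

theorem tendsto_inv_smul_integral [CompleteSpace E] {u : ℝ → E}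
    (hu : ContinuousOn u (Set.Ici 0)) :
    Tendsto (fun t : ℝ => t⁻¹ • ∫ s in (0 : ℝ)..t, u s) (𝓝[>] 0) (𝓝 (u 0)) := by
  have hderiv : HasDerivWithinAt (fun t => ∫ s in (0 : ℝ)..t, u s) (u 0) (Set.Ici 0) 0 :=
    intervalIntegral.integral_hasDerivWithinAt_right (t := Set.Ioi 0) IntervalIntegrable.refl
      ((hu.mono Set.Ioi_subset_Ici_self).stronglyMeasurableAtFilter_nhdsWithin
        measurableSet_Ioi 0) ((hu 0 Set.self_mem_Ici).mono Set.Ioi_subset_Ici_self)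
  simpa [slope_fun_def] using (hasDerivWithinAt_iff_tendsto_slope'
    Set.self_notMem_Ioi).1 hderiv.Ioi_of_Ici

theorem IsC0Semigroup.apply_integral_sub [CompleteSpace E] (hT : IsC0Semigroup T) {r h : ℝ}
    (hr : 0 ≤ r) (hh : 0 ≤ h) (f : E) :
    T r (∫ s in (0 : ℝ)..h, T s f) - ∫ s in (0 : ℝ)..h, T s f =
      ∫ s in (0 : ℝ)..r, T s (T h f - f) := by
  have hint : ∀ a b : ℝ, 0 ≤ a → 0 ≤ b → ∀ x, IntervalIntegrable (fun s => T s x) volume a b :=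
    fun a b ha hb x => ((hT.2 x).mono fun s hs => (le_min ha hb).trans hs.1).intervalIntegrable
  have hshift : ∀ a b : ℝ, 0 ≤ a → 0 ≤ b →
      ∫ s in (0 : ℝ)..b, T s (T a f) = ∫ s in a..(b + a), T s f := fun a b ha hb => by
    have htrans := intervalIntegral.integral_comp_add_right (a := 0) (b := b) (fun s => T s f) a
    rw [zero_add] at htrans
    rw [← htrans]
    refine intervalIntegral.integral_congr fun s hs => (hT.1.apply_add ?_ ha f).symm
    exact (Set.uIcc_of_le hb ▸ hs).1
  have hcomm : T r (∫ s in (0 : ℝ)..h, T s f) = ∫ s in (0 : ℝ)..h, T s (T r f) := by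
    rw [← (T r).intervalIntegral_comp_comm (hint 0 h le_rfl hh f)]
    refine intervalIntegral.integral_congr fun s hs => ?_
    have hs : 0 ≤ s := (Set.uIcc_of_le hh ▸ hs).1
    simp only [← hT.1.apply_add hr hs, ← hT.1.apply_add hs hr, add_comm]
  simp only [map_sub]
  rw [hcomm, intervalIntegral.integral_sub (hint 0 r le_rfl hr _) (hint 0 r le_rfl hr _),
    hshift r h hr hh, hshift h r hh hr, add_comm r h]
  exact intervalIntegral.integral_interval_sub_interval_comm' (hint _ _ hr (by positivity) f)
    (hint _ _ le_rfl hh f) (hint _ _ hr le_rfl f)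

theorem InGenerator.smul (h : InGenerator T f g) (c : ℝ) : InGenerator T (c • f) (c • g) := by
  refine (Tendsto.const_smul h c).congr fun t => ?_
  rw [map_smul, ← smul_sub, smul_comm]

theorem InGenerator.apply (hT : IsSemigroup T) (h : InGenerator T f g) {s : ℝ} (hs : 0 ≤ s) :
    InGenerator T (T s f) (T s g) := by
  refine (((T s).continuous.tendsto g).comp h).congr' ?_
  filter_upwards [self_mem_nhdsWithin] with t (ht : 0 < t)
  rw [← hT.apply_add ht.le hs, add_comm t s, hT.apply_add hs ht.le, Function.comp_apply,
    map_smul, map_sub]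

theorem IsC0Semigroup.inGenerator_integral [CompleteSpace E] (hT : IsC0Semigroup T) {h : ℝ}
    (hh : 0 ≤ h) (f : E) : InGenerator T (∫ s in (0 : ℝ)..h, T s f) (T h f - f) := by
  have hmean := tendsto_inv_smul_integral (hT.2 (T h f - f))
  rw [hT.1.apply_zero] at hmean
  refine hmean.congr' ?_
  filter_upwards [self_mem_nhdsWithin] with r (hr : 0 < r)
  rw [hT.apply_integral_sub hr.le hh]

theorem IsC0Semigroup.dense_domain [CompleteSpace E] (hT : IsC0Semigroup T) :
    Dense {f | ∃ g, InGenerator T f g} := fun f => by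
  have hmean := tendsto_inv_smul_integral (hT.2 f)
  rw [hT.1.apply_zero] at hmean
  refine mem_closure_of_tendsto hmean ?_
  filter_upwards [self_mem_nhdsWithin] with r (hr : 0 < r)
  exact ⟨_, (hT.inGenerator_integral hr.le f).smul r⁻¹⟩

theorem IsC0Semigroup.hasDerivWithinAt_apply_sub [CompleteSpace E] (hP : IsC0Semigroup P)
    (hQ : IsSemigroup Q) {s t : ℝ} (hs : 0 ≤ s) (hst : s < t) (hQf : InGenerator Q (Q s f) g)
    (hPf : InGenerator P (Q s f) g') :
    HasDerivWithinAt (fun r => P (t - r) (Q r f)) (P (t - s) (g - g')) (Set.Ioi s) s := by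
  rw [hasDerivWithinAt_iff_tendsto_slope' Set.self_notMem_Ioi]
  have hquot : Tendsto (fun r : ℝ => r⁻¹ • (Q r (Q s f) - P r (Q s f))) (𝓝[>] 0) (𝓝 (g - g')) :=
    (Tendsto.sub hQf hPf).congr fun r => by rw [← smul_sub, sub_sub_sub_cancel_right]
  have hshift : Tendsto (fun r : ℝ => r - s) (𝓝[>] s) (𝓝[>] 0) := by
    refine tendsto_nhdsWithin_iff.2 ⟨?_, eventually_mem_nhdsWithin.mono fun _ hr =>
      Set.mem_Ioi.2 (sub_pos.2 hr)⟩
    simpa using ((continuous_sub_right s).tendsto s).mono_left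
      (nhdsWithin_le_nhds (s := Set.Ioi s))
  have hsub : Tendsto (fun r : ℝ => t - r) (𝓝[>] s) (𝓝 (t - s)) :=
    ((continuous_sub_left t).tendsto s).mono_left nhdsWithin_le_nhds
  have hlt : ∀ᶠ r in 𝓝[>] s, r < t := nhdsWithin_le_nhds (gt_mem_nhds hst)
  have hlim : Tendsto (fun r : ℝ => P (t - r) ((r - s)⁻¹ • (Q (r - s) (Q s f) - P (r - s) (Q s f))))
      (𝓝[>] s) (𝓝 (P (t - s) (g - g'))) :=
    (hP.continuousOn_uncurry (t - s, g - g') ⟨sub_nonneg.2 hst.le, trivial⟩).tendsto.comp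
      (tendsto_nhdsWithin_iff.2 ⟨hsub.prodMk_nhds (hquot.comp hshift),
        hlt.mono fun r hr => ⟨sub_nonneg.2 hr.le, trivial⟩⟩)
  refine hlim.congr' ?_
  filter_upwards [hlt, self_mem_nhdsWithin] with r hrt (hsr : s < r)
  have hPsplit : P (t - r) (P (r - s) (Q s f)) = P (t - s) (Q s f) := by
    rw [← hP.1.apply_add (sub_nonneg.2 hrt.le) (sub_nonneg.2 hsr.le), sub_add_sub_cancel]
  rw [← hQ.apply_add (sub_nonneg.2 hsr.le) hs, sub_add_cancel, map_smul, map_sub, hPsplit,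
    slope_def_module]

/-- `Q` is the `C₀`-semigroup generated by `A + B`, where `A` is the generator of `P` and `B` is a
bounded operator. -/
def IsPerturbation (P Q : ℝ → E →L[ℝ] E) (B : E →L[ℝ] E) : Prop :=
  IsC0Semigroup Q ∧ ∀ f g : E, InGenerator Q f g ↔ InGenerator P f (g - B f)

theorem IsPerturbation.duhamel_of_inGenerator [CompleteSpace E] (hP : IsC0Semigroup P)
    (h : IsPerturbation P Q B) (hfg : InGenerator Q f g) {t : ℝ} (ht : 0 ≤ t) :
    Q t f = P t f + convolve P (fun s => B (Q s f)) t := by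
  have hQf : ContinuousOn (fun s => Q s f) (Set.Icc 0 t) := (h.1.2 f).mono fun s hs => hs.1
  have hFTC := intervalIntegral.integral_eq_sub_of_hasDeriv_right_of_le ht
    (hP.continuousOn_apply_sub hQf) (f' := fun s => P (t - s) (B (Q s f))) (fun s hs => by
      have hgen := hfg.apply h.1.1 hs.1.le
      simpa using hP.hasDerivWithinAt_apply_sub h.1.1 hs.1.le hs.2 hgen ((h.2 _ _).1 hgen))
    (hP.intervalIntegrable_apply_sub ht (B.continuous.comp_continuousOn hQf))
  rw [convolve, hFTC, sub_self, hP.1.apply_zero, sub_zero, h.1.1.apply_zero, add_sub_cancel]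

theorem IsPerturbation.duhamel [CompleteSpace E] (hP : IsC0Semigroup P)
    (h : IsPerturbation P Q B) {t : ℝ} (ht : 0 ≤ t) (f : E) :
    Q t f = P t f + convolve P (fun s => B (Q s f)) t := by
  obtain ⟨x, hx, hxf⟩ := mem_closure_iff_seq_limit.1 (h.1.dense_domain f)
  obtain ⟨N, hN⟩ := h.1.exists_norm_le t
  obtain ⟨K, hK⟩ := hxf.norm.bddAbove_range
  have hconv : Tendsto (fun n => convolve P (fun s => B (Q s (x n))) t) atTop
      (𝓝 (convolve P (fun s => B (Q s f)) t)) :=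
    tendsto_convolve (fun _ => hP) (fun τ => (hP.exists_norm_le τ).imp fun _ hM _ => hM)
      (fun _ _ _ => tendsto_const_nhds) ht (K := ‖B‖ * (N * K))
      (fun n => B.continuous.comp_continuousOn ((h.1.2 (x n)).mono fun s hs => hs.1))
      (fun n s hs => B.le_of_opNorm_le_of_le le_rfl
        ((Q s).le_of_opNorm_le_of_le (hN s hs) (hK ⟨n, rfl⟩)))
      (fun s _ => ((B.comp (Q s)).continuous.tendsto f).comp hxf)
  refine tendsto_nhds_unique (((Q t).continuous.tendsto f).comp hxf)
    (((((P t).continuous.tendsto f).comp hxf).add hconv).congr fun n => ?_)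
  obtain ⟨g, hg⟩ := hx n
  exact (h.duhamel_of_inGenerator hP hg ht).symm

theorem isPerturbation_iff_duhamel [CompleteSpace E] (hP : IsC0Semigroup P)
    (hQ : IsC0Semigroup Q) :
    IsPerturbation P Q B ↔
      ∀ t : ℝ, 0 ≤ t → ∀ f : E, Q t f = P t f + convolve P (fun s => B (Q s f)) t := by
  refine ⟨fun h t ht f => h.duhamel hP ht f, fun h => ⟨hQ, fun f g => ?_⟩⟩
  have hmean : Tendsto (fun t : ℝ => t⁻¹ • convolve P (fun s => B (Q s f)) t) (𝓝[>] 0)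
      (𝓝 (B f)) := by
    simpa only [hQ.1.apply_zero] using hP.tendsto_inv_smul_convolve
      (u := fun s => B (Q s f)) (B.continuous.comp_continuousOn (hQ.2 f))
  have hquot : ∀ᶠ t in 𝓝[>] (0 : ℝ), t⁻¹ • (Q t f - f) =
      t⁻¹ • (P t f - f) + t⁻¹ • convolve P (fun s => B (Q s f)) t := by
    filter_upwards [self_mem_nhdsWithin] with t (ht : 0 < t)
    rw [h t ht.le f, ← smul_add, add_sub_right_comm]
  refine ⟨fun hg => ?_, fun hg => ?_⟩
  · refine (Tendsto.sub hg hmean).congr' (hquot.mono fun t ht => ?_)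
    rw [ht, add_sub_cancel_right]
  · refine (sub_add_cancel g (B f) ▸ Tendsto.add hg hmean).congr' (hquot.mono fun t ht => ht.symm)

theorem IsPerturbation.of_tendstoStrongly [CompleteSpace E] {G G' : ℕ → ℝ → E →L[ℝ] E}
    (hG : ∀ n, IsC0Semigroup (G n)) (hP : IsC0Semigroup P) (hQ : IsC0Semigroup Q)
    (hGbdd : UniformlyLocallyBounded G) (hGbdd' : UniformlyLocallyBounded G')
    (hGP : TendstoStrongly G P) (hGQ : TendstoStrongly G' Q)
    (h : ∀ n, IsPerturbation (G n) (G' n) B) : IsPerturbation P Q B := by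
  refine (isPerturbation_iff_duhamel hP hQ).2 fun t ht f => ?_
  obtain ⟨N, hN⟩ := hGbdd' t
  have hconv : Tendsto (fun n => convolve (G n) (fun s => B (G' n s f)) t) atTop
      (𝓝 (convolve P (fun s => B (Q s f)) t)) :=
    tendsto_convolve hG hGbdd hGP ht (K := ‖B‖ * (N * ‖f‖))
      (fun n => B.continuous.comp_continuousOn (((h n).1.2 f).mono fun s hs => hs.1))
      (fun n s hs => B.le_of_opNorm_le_of_le le_rfl ((G' n s).le_of_opNorm_le (hN n s hs) f))
      (fun s hs => (B.continuous.tendsto _).comp (hGQ s hs.1 f))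
  exact tendsto_nhds_unique (hGQ t ht f)
    (((hGP t ht f).add hconv).congr fun n => ((h n).duhamel (hG n) ht f).symm)

theorem IsPerturbation.symm (hP : IsC0Semigroup P) (h : IsPerturbation P Q B) :
    IsPerturbation Q P (-B) :=
  ⟨hP, fun f g => by rw [h.2, neg_apply, sub_neg_eq_add, add_sub_cancel_right]⟩

theorem IsPerturbation.trans (h : IsPerturbation P Q B) (h' : IsPerturbation Q S C) :
    IsPerturbation P S (B + C) :=
  ⟨h'.1, fun f g => by rw [h'.2, h.2, add_apply, sub_sub, add_comm]⟩

/-- The rescaled semigroup `t ↦ e^{ct} T(t)`. -/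
def rescale (c : ℝ) (T : ℝ → E →L[ℝ] E) (t : ℝ) : E →L[ℝ] E :=
  Real.exp (c * t) • T t

theorem IsC0Semigroup.rescale (hT : IsC0Semigroup T) (c : ℝ) : IsC0Semigroup (rescale c T) := by
  refine ⟨⟨by simp [Absorption.rescale, hT.1.1], fun s t hs ht => ?_⟩, fun f => ?_⟩
  · simp only [Absorption.rescale, hT.1.2 s t hs ht, ContinuousLinearMap.smul_comp,
      ContinuousLinearMap.comp_smul, smul_smul, ← Real.exp_add, mul_add, add_comm]
  · have hexp : ContinuousOn (fun t => Real.exp (c * t)) (Set.Ici 0) := by fun_prop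
    exact hexp.smul (hT.2 f)

theorem rescale_rescale (c d : ℝ) (T : ℝ → E →L[ℝ] E) :
    rescale c (rescale d T) = rescale (c + d) T := by
  funext t
  simp only [rescale, smul_smul, ← Real.exp_add, add_mul]

theorem rescale_zero (T : ℝ → E →L[ℝ] E) : rescale 0 T = T := by
  funext t
  simp [rescale]

theorem InGenerator.rescale (h : InGenerator T f g) (c : ℝ) :
    InGenerator (rescale c T) f (g + c • f) := by
  have hexp : HasDerivAt (fun t => Real.exp (c * t)) c 0 := by
    simpa using ((hasDerivAt_id (0 : ℝ)).const_mul c).exp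
  have hquot : Tendsto (fun t : ℝ => t⁻¹ * (Real.exp (c * t) - 1)) (𝓝[>] 0) (𝓝 c) := by
    simpa using (hasDerivAt_iff_tendsto_slope_zero.1 hexp).mono_left
      (nhdsGT_le_nhdsNE 0)
  have hone : Tendsto (fun t => Real.exp (c * t)) (𝓝[>] 0) (𝓝 1) := by
    simpa using hexp.continuousAt.tendsto.mono_left (nhdsWithin_le_nhds (s := Set.Ioi 0))
  have hlim := (hone.smul h).add (hquot.smul_const f)
  rw [one_smul] at hlim
  refine hlim.congr fun t => ?_
  simp only [Absorption.rescale, smul_apply]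
  module

theorem isPerturbation_rescale (hT : IsC0Semigroup T) (c : ℝ) :
    IsPerturbation T (rescale c T) (c • ContinuousLinearMap.id ℝ E) := by
  refine ⟨hT.rescale c, fun f g => ⟨fun h => ?_, fun h => ?_⟩⟩
  · simpa [rescale_rescale, rescale_zero, sub_eq_add_neg] using h.rescale (-c)
  · simpa using h.rescale c

end Semigroups

theorem eq_zero_of_le_mul_integral {φ : ℝ → ℝ} {K τ : ℝ} (hτ : 0 ≤ τ)
    (hφ : ContinuousOn φ (Set.Icc 0 τ)) (hnonneg : ∀ t ∈ Set.Icc 0 τ, 0 ≤ φ t)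
    (hle : ∀ t ∈ Set.Icc 0 τ, φ t ≤ K * ∫ s in (0 : ℝ)..t, φ s) : φ τ = 0 := by
  have hcont : ContinuousOn (fun t => ∫ s in (0 : ℝ)..t, φ s) (Set.Icc 0 τ) := by
    rw [← Set.uIcc_of_le hτ] at hφ ⊢
    exact intervalIntegral.continuousOn_primitive_interval
      (hφ.integrableOn_compact isCompact_uIcc)
  have hderiv : ∀ t ∈ Set.Ico 0 τ,
      HasDerivWithinAt (fun t => ∫ s in (0 : ℝ)..t, φ s) (φ t) (Set.Ici t) t := fun t ht =>
    intervalIntegral.integral_hasDerivWithinAt_right (t := Set.Ioi t)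
      ((hφ.mono (Set.Icc_subset_Icc_right ht.2.le)).intervalIntegrable_of_Icc ht.1)
      (AEStronglyMeasurable.stronglyMeasurableAtFilter_of_mem
        (hφ.aestronglyMeasurable measurableSet_Icc) (Icc_mem_nhdsGT_of_mem ht))
      ((hφ t (Set.Ico_subset_Icc_self ht)).mono_of_mem_nhdsWithin (Icc_mem_nhdsGT_of_mem ht))
  have hintegral : ∀ t ∈ Set.Icc 0 τ, 0 ≤ ∫ s in (0 : ℝ)..t, φ s := fun t ht =>
    intervalIntegral.integral_nonneg ht.1 fun s hs => hnonneg s ⟨hs.1, hs.2.trans ht.2⟩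
  have hzero := eq_zero_of_abs_deriv_le_mul_abs_self_of_eq_zero_right hcont hderiv
    intervalIntegral.integral_same (K := K) (fun t ht => by
      have ht := Set.Ico_subset_Icc_self ht
      rw [Real.norm_of_nonneg (hnonneg t ht), Real.norm_of_nonneg (hintegral t ht)]
      exact hle t ht) τ (Set.right_mem_Icc.2 hτ)
  have hτ_mem := Set.right_mem_Icc.2 hτ
  exact le_antisymm (by simpa only [hzero, mul_zero] using hle τ hτ_mem) (hnonneg τ hτ_mem)

section OrderContinuousNorm

/-- Order continuity of the norm of a Banach lattice, in the form: every increasing sequence which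
is bounded above converges in norm. -/
def HasOrderContinuousNorm (E : Type*) [NormedAddCommGroup E] [Lattice E] : Prop :=
  ∀ ⦃u : ℕ → E⦄, Monotone u → BddAbove (Set.range u) → ∃ v, Tendsto u atTop (𝓝 v)

variable {E : Type*} [NormedAddCommGroup E] [Lattice E] [IsOrderedAddMonoid E] [HasSolidNorm E]
  [CompleteSpace E]

theorem hasOrderContinuousNorm_of_superadditive {q : ℝ} (hq : 0 < q)
    (hadd : ∀ f g : E, 0 ≤ f → 0 ≤ g → ‖f‖ ^ q + ‖g‖ ^ q ≤ ‖f + g‖ ^ q) :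
    HasOrderContinuousNorm E := by
  rintro u hu ⟨b, hb⟩
  have hnonneg : ∀ n, 0 ≤ u n - u 0 := fun n => sub_nonneg.2 (hu n.zero_le)
  have hgap : ∀ n m, n ≤ m → ‖u n - u 0‖ ^ q + ‖u m - u n‖ ^ q ≤ ‖u m - u 0‖ ^ q :=
    fun n m hnm => by
      simpa only [sub_add_sub_cancel'] using hadd _ _ (hnonneg n) (sub_nonneg.2 (hu hnm))
  have hmono : Monotone fun n => ‖u n - u 0‖ ^ q := fun n m hnm =>
    le_of_add_le_of_nonneg_left (hgap n m hnm) (Real.rpow_nonneg (norm_nonneg _) q)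
  have hbdd : BddAbove (Set.range fun n => ‖u n - u 0‖ ^ q) := by
    refine ⟨‖b - u 0‖ ^ q, Set.forall_mem_range.2 fun n => ?_⟩
    refine Real.rpow_le_rpow (norm_nonneg _) (norm_le_norm_of_abs_le_abs ?_) hq.le
    exact abs_le_abs_of_nonneg (hnonneg n) (sub_le_sub_right (hb ⟨n, rfl⟩) _)
  obtain ⟨a, ha⟩ : ∃ a, Tendsto (fun n => ‖u n - u 0‖ ^ q) atTop (𝓝 a) :=
    ⟨_, tendsto_atTop_ciSup hmono hbdd⟩
  have hle : ∀ n, ‖u n - u 0‖ ^ q ≤ a := hmono.ge_of_tendsto ha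
  refine cauchySeq_tendsto_of_complete
    (cauchySeq_of_le_tendsto_0' (fun n => (a - ‖u n - u 0‖ ^ q) ^ q⁻¹) (fun n m hnm => ?_) ?_)
  · rw [dist_comm, dist_eq_norm,
      Real.le_rpow_inv_iff_of_pos (norm_nonneg _) (sub_nonneg.2 (hle n)) hq]
    linarith [hgap n m hnm, hle m]
  · simpa [hq.ne'] using (ha.const_sub a).rpow_const (p := q⁻¹) (.inr (inv_nonneg.2 hq.le))

end OrderContinuousNorm

section BanachLattice

variable {E : Type*} [NormedAddCommGroup E] [Lattice E] [NormedSpace ℝ E]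
  {P Q T S S' R R' : ℝ → E →L[ℝ] E} {B B' D G H : E →L[ℝ] E} {f g : E}

/-- The order on operators, `G f ≤ H f` for all `f ≥ 0`; in particular `OpLE 0 G` says that `G` is
a positive operator. -/
def OpLE (G H : E →L[ℝ] E) : Prop :=
  ∀ ⦃f : E⦄, 0 ≤ f → G f ≤ H f

local infix:50 " ≼ " => OpLE

theorem opLE_of_tendsto [OrderClosedTopology E] {G H : ℕ → E →L[ℝ] E} {G₀ H₀ : E →L[ℝ] E}
    (hG : ∀ f, Tendsto (fun n => G n f) atTop (𝓝 (G₀ f)))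
    (hH : ∀ f, Tendsto (fun n => H n f) atTop (𝓝 (H₀ f))) (h : ∀ n, G n ≼ H n) : G₀ ≼ H₀ :=
  fun f hf => le_of_tendsto_of_tendsto' (hG f) (hH f) fun n => h n hf

theorem rescale_nonneg [IsOrderedModule ℝ E] (hT : ∀ t, 0 ≤ t → 0 ≼ T t) (c : ℝ) {t : ℝ}
    (ht : 0 ≤ t) : 0 ≼ rescale c T t :=
  fun _ hf => smul_nonneg (Real.exp_nonneg _) (hT t ht hf)

/-- A positive element of the centre of the Banach lattice `E`, that is, an operator `B` with
`0 ≤ B ≤ c` for some scalar `c`. On `L_p` these are the multiplications by nonnegative bounded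
functions. -/
def IsPositiveCentral (B : E →L[ℝ] E) : Prop :=
  0 ≼ B ∧ ∃ c : ℝ, B ≼ c • ContinuousLinearMap.id ℝ E

/-- The family `R` is the absorption semigroup obtained from `T` by the absorption rates `B n`: the
strong limit of the semigroups generated by `A - B n`, where `A` is the generator of `T`. On `L_p`,
`B n` is the multiplication by the truncated rate `V ∧ n`. -/
structure IsAbsorptionLimit (T : ℝ → E →L[ℝ] E) (B : ℕ → E →L[ℝ] E) (R : ℝ → E →L[ℝ] E) :
    Prop where
  isPositiveCentral : ∀ n, IsPositiveCentral (B n)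
  exists_isPerturbation : ∃ S : ℕ → ℝ → E →L[ℝ] E,
    (∀ n, IsPerturbation T (S n) (-B n)) ∧ TendstoStrongly S R

theorem IsAbsorptionLimit.comp_add {B : ℕ → E →L[ℝ] E} (h : IsAbsorptionLimit T B R)
    (k : ℕ) : IsAbsorptionLimit T (fun n => B (n + k)) R where
  isPositiveCentral n := h.isPositiveCentral (n + k)
  exists_isPerturbation := by
    obtain ⟨S, hS, hSR⟩ := h.exists_isPerturbation
    exact ⟨fun n => S (n + k), fun n => hS (n + k), fun t ht f =>
      (hSR t ht f).comp (tendsto_add_atTop_nat k)⟩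

section Ordered

variable [IsOrderedAddMonoid E]

theorem opLE_iff_nonneg_sub : G ≼ H ↔ 0 ≼ H - G :=
  forall₂_congr fun _ _ => sub_nonneg.symm

theorem OpLE.apply_mono (hG : 0 ≼ G) (hfg : f ≤ g) : G f ≤ G g := by
  simpa using hG (sub_nonneg.2 hfg)

theorem OpLE.opNorm_le [HasSolidNorm E] (hG : 0 ≼ G) (hGH : G ≼ H) : ‖G‖ ≤ ‖H‖ := by
  refine G.opNorm_le_bound (norm_nonneg _) fun f => ?_
  have habs : |G f| ≤ H |f| := by
    refine (abs_le'.2 ⟨hG.apply_mono (le_abs_self f), ?_⟩).trans (hGH (abs_nonneg f))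
    rw [← map_neg]
    exact hG.apply_mono (neg_le_abs f)
  calc ‖G f‖ ≤ ‖H |f|‖ := norm_le_norm_of_abs_le_abs (habs.trans (le_abs_self _))
    _ ≤ ‖H‖ * ‖|f|‖ := H.le_opNorm _
    _ = ‖H‖ * ‖f‖ := by rw [norm_abs_eq_norm]

theorem uniformlyLocallyBounded_of_opLE [HasSolidNorm E] [CompleteSpace E] (hT : IsC0Semigroup T)
    {G : ℕ → ℝ → E →L[ℝ] E} (hG : ∀ n t, 0 ≤ t → 0 ≼ G n t) (hGT : ∀ n t, 0 ≤ t → G n t ≼ T t) :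
    UniformlyLocallyBounded G := fun τ =>
  (hT.exists_norm_le τ).imp fun _ hM n t ht =>
    ((hG n t ht.1).opNorm_le (hGT n t ht.1)).trans (hM t ht)

theorem IsSemigroup.isC0Semigroup_of_squeeze [HasSolidNorm E] [CompleteSpace E]
    (hS : IsSemigroup S) (hP : IsC0Semigroup P) (hT : IsC0Semigroup T)
    (hnonneg : ∀ t, 0 ≤ t → 0 ≼ S t) (hPS : ∀ t, 0 ≤ t → P t ≼ S t)
    (hST : ∀ t, 0 ≤ t → S t ≼ T t) : IsC0Semigroup S := by
  have tendsto_zero : ∀ {U : ℝ → E →L[ℝ] E}, IsC0Semigroup U → ∀ f,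
      Tendsto (fun t => U t f) (𝓝[≥] 0) (𝓝 f) := fun {U} hU f => by
    simpa only [ContinuousWithinAt, hU.1.apply_zero] using hU.2 f 0 Set.self_mem_Ici
  have tendsto_of_nonneg : ∀ f, 0 ≤ f → Tendsto (fun t => S t f) (𝓝[≥] 0) (𝓝 f) := fun f hf => by
    have hgap : Tendsto (fun t => ‖T t f - P t f‖) (𝓝[≥] 0) (𝓝 0) := by
      simpa using ((tendsto_zero hT f).sub (tendsto_zero hP f)).norm
    have hdiff : Tendsto (fun t => S t f - P t f) (𝓝[≥] 0) (𝓝 0) := by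
      refine squeeze_zero_norm' ?_ hgap
      filter_upwards [self_mem_nhdsWithin] with t ht
      exact norm_le_norm_of_abs_le_abs (abs_le_abs_of_nonneg (sub_nonneg.2 (hPS t ht hf))
        (sub_le_sub_right (hST t ht hf) _))
    simpa using hdiff.add (tendsto_zero hP f)
  refine hS.isC0Semigroup (fun τ => ?_) fun f => ?_
  · exact (hT.exists_norm_le τ).imp fun _ hM t ht =>
      ((hnonneg t ht.1).opNorm_le (hST t ht.1)).trans (hM t ht)
  · simpa only [← map_sub, posPart_sub_negPart] using
      (tendsto_of_nonneg f⁺ (posPart_nonneg f)).sub (tendsto_of_nonneg f⁻ (negPart_nonneg f))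

section Module

variable [IsOrderedModule ℝ E]

theorem convolve_nonneg [ClosedIciTopology E] (hP : ∀ t, 0 ≤ t → 0 ≼ P t) {u : ℝ → E} {t : ℝ}
    (ht : 0 ≤ t) (hu : ∀ s ∈ Set.Icc 0 t, 0 ≤ u s) : 0 ≤ convolve P u t := by
  rw [convolve, intervalIntegral.integral_of_le ht]
  refine integral_nonneg_of_ae ((ae_restrict_iff' measurableSet_Ioc).2 (.of_forall fun s hs => ?_))
  exact hP _ (sub_nonneg.2 hs.2) (hu s (Set.Ioc_subset_Icc_self hs))

variable [HasSolidNorm E] [CompleteSpace E]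

theorem negPart_le_convolve_negPart (hP : IsC0Semigroup P) (hP0 : ∀ t, 0 ≤ t → 0 ≼ P t)
    (hB : 0 ≼ B) (hPQ : IsPerturbation P Q B) (hf : 0 ≤ f) {t : ℝ} (ht : 0 ≤ t) :
    (Q t f)⁻ ≤ convolve P (fun s => B (Q s f)⁻) t := by
  have hQ : ContinuousOn (fun s => Q s f) (Set.Icc 0 t) := (hPQ.1.2 f).mono fun s hs => hs.1
  have hint : IntervalIntegrable (fun s => P (t - s) (B (Q s f))) volume 0 t :=
    hP.intervalIntegrable_apply_sub ht (B.continuous.comp_continuousOn hQ)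
  have hint_neg : IntervalIntegrable (fun s => P (t - s) (B (Q s f)⁻)) volume 0 t :=
    hP.intervalIntegrable_apply_sub ht
      ((B.continuous.comp continuous_negPart).comp_continuousOn hQ)
  have hsum : convolve P (fun s => B (Q s f)) t + convolve P (fun s => B (Q s f)⁻) t =
      convolve P (fun s => B (Q s f)⁺) t := by
    simp only [convolve, ← intervalIntegral.integral_add hint hint_neg, ← map_add,
      ← sub_eq_iff_eq_add.1 (posPart_sub_negPart (Q _ f))]
  refine sup_le (neg_le_iff_add_nonneg'.2 ?_)
    (convolve_nonneg hP0 ht fun s _ => hB (negPart_nonneg _))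
  rw [hPQ.duhamel hP ht, add_assoc, hsum]
  exact add_nonneg (hP0 t ht hf) (convolve_nonneg hP0 ht fun s _ => hB (posPart_nonneg _))

theorem IsPerturbation.nonneg (hP : IsC0Semigroup P) (hP0 : ∀ t, 0 ≤ t → 0 ≼ P t) (hB : 0 ≼ B)
    (hPQ : IsPerturbation P Q B) {t : ℝ} (ht : 0 ≤ t) : 0 ≼ Q t := by
  intro f hf
  obtain ⟨M, hM⟩ := hP.exists_norm_le t
  have hcont : ContinuousOn (fun s => ‖(Q s f)⁻‖) (Set.Icc 0 t) :=
    (continuous_negPart.comp_continuousOn ((hPQ.1.2 f).mono fun s hs => hs.1)).norm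
  have hgronwall : ∀ r ∈ Set.Icc 0 t,
      ‖(Q r f)⁻‖ ≤ M * ‖B‖ * ∫ s in (0 : ℝ)..r, ‖(Q s f)⁻‖ := fun r hr => by
    have hsub : Set.Icc 0 r ⊆ Set.Icc 0 t := Set.Icc_subset_Icc_right hr.2
    calc ‖(Q r f)⁻‖ ≤ ‖convolve P (fun s => B (Q s f)⁻) r‖ :=
          norm_le_norm_of_abs_le_abs (abs_le_abs_of_nonneg (negPart_nonneg _)
            (negPart_le_convolve_negPart hP hP0 hB hPQ hf hr.1))
      _ ≤ ∫ s in (0 : ℝ)..r, M * ‖B‖ * ‖(Q s f)⁻‖ := by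
          refine intervalIntegral.norm_integral_le_of_norm_le hr.1 (.of_forall fun s hs => ?_)
            (((hcont.mono hsub).const_mul _).intervalIntegrable_of_Icc hr.1)
          rw [mul_assoc]
          exact (P (r - s)).le_of_opNorm_le_of_le
            (hM _ ⟨sub_nonneg.2 hs.2, by linarith [hs.1, hr.2]⟩) (B.le_opNorm _)
      _ = M * ‖B‖ * ∫ s in (0 : ℝ)..r, ‖(Q s f)⁻‖ := intervalIntegral.integral_const_mul _ _
  exact negPart_eq_zero.1 (norm_eq_zero.1
    (eq_zero_of_le_mul_integral ht hcont (fun _ _ => norm_nonneg _) hgronwall))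

theorem IsPerturbation.opLE (hP : IsC0Semigroup P) (hP0 : ∀ t, 0 ≤ t → 0 ≼ P t)
    (hQ0 : ∀ t, 0 ≤ t → 0 ≼ Q t) (hB : 0 ≼ B) (hPQ : IsPerturbation P Q B) {t : ℝ} (ht : 0 ≤ t) :
    P t ≼ Q t := fun f hf => by
  rw [hPQ.duhamel hP ht]
  exact le_add_of_nonneg_right (convolve_nonneg hP0 ht fun s hs => hB (hQ0 s hs.1 hf))

-- Since `-B = (c - B) - c`, `S` is a perturbation of `e^{-ct} T(t)` by the positive `c - B`.
theorem IsPerturbation.nonneg_of_isPositiveCentral (hT : IsC0Semigroup T)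
    (hT0 : ∀ t, 0 ≤ t → 0 ≼ T t) (hB : IsPositiveCentral B) (h : IsPerturbation T S (-B)) {t : ℝ}
    (ht : 0 ≤ t) : 0 ≼ S t := by
  obtain ⟨c, hc⟩ := hB.2
  refine (((isPerturbation_rescale hT (-c)).symm hT).trans h).nonneg (hT.rescale (-c))
    (fun t ht => rescale_nonneg hT0 (-c) ht) (fun f hf => ?_) ht
  simpa using hc hf

theorem IsPerturbation.opLE_of_isPositiveCentral (hT : IsC0Semigroup T)
    (hT0 : ∀ t, 0 ≤ t → 0 ≼ T t) (hB : IsPositiveCentral B) (h : IsPerturbation T S (-B)) {t : ℝ}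
    (ht : 0 ≤ t) : S t ≼ T t :=
  (h.symm hT).opLE h.1 (fun _ => h.nonneg_of_isPositiveCentral hT hT0 hB) hT0
    ((neg_neg B).symm ▸ hB.1) ht

theorem IsPerturbation.antitone (hT : IsC0Semigroup T) (hT0 : ∀ t, 0 ≤ t → 0 ≼ T t)
    (hB : IsPositiveCentral B) (hB' : IsPositiveCentral B') (h : IsPerturbation T S (-B))
    (h' : IsPerturbation T S' (-B')) (hBB' : B' ≼ B) {t : ℝ} (ht : 0 ≤ t) : S t ≼ S' t :=
  ((h.symm hT).trans h').opLE h.1 (fun _ => h.nonneg_of_isPositiveCentral hT hT0 hB)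
    (fun _ => h'.nonneg_of_isPositiveCentral hT hT0 hB')
    (by simpa only [neg_neg, ← sub_eq_add_neg] using opLE_iff_nonneg_sub.1 hBB') ht

namespace IsAbsorptionLimit

variable {B B' : ℕ → E →L[ℝ] E}

theorem nonneg (hT : IsC0Semigroup T) (hT0 : ∀ t, 0 ≤ t → 0 ≼ T t)
    (h : IsAbsorptionLimit T B R) (t : ℝ) (ht : 0 ≤ t) : 0 ≼ R t := by
  obtain ⟨S, hS, hSR⟩ := h.exists_isPerturbation
  exact opLE_of_tendsto (fun _ => tendsto_const_nhds) (hSR t ht) fun n =>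
    (hS n).nonneg_of_isPositiveCentral hT hT0 (h.isPositiveCentral n) ht

theorem opLE (hT : IsC0Semigroup T) (hT0 : ∀ t, 0 ≤ t → 0 ≼ T t)
    (h : IsAbsorptionLimit T B R) (t : ℝ) (ht : 0 ≤ t) : R t ≼ T t := by
  obtain ⟨S, hS, hSR⟩ := h.exists_isPerturbation
  exact opLE_of_tendsto (hSR t ht) (fun _ => tendsto_const_nhds) fun n =>
    (hS n).opLE_of_isPositiveCentral hT hT0 (h.isPositiveCentral n) ht

theorem antitone (hT : IsC0Semigroup T) (hT0 : ∀ t, 0 ≤ t → 0 ≼ T t)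
    (h : IsAbsorptionLimit T B R) (h' : IsAbsorptionLimit T B' R') (hBB' : ∀ n, B' n ≼ B n)
    (t : ℝ) (ht : 0 ≤ t) : R t ≼ R' t := by
  obtain ⟨S, hS, hSR⟩ := h.exists_isPerturbation
  obtain ⟨S', hS', hSR'⟩ := h'.exists_isPerturbation
  exact opLE_of_tendsto (hSR t ht) (hSR' t ht) fun n =>
    (hS n).antitone hT hT0 (h.isPositiveCentral n) (h'.isPositiveCentral n) (hS' n) (hBB' n) ht

theorem isC0Semigroup (hT : IsC0Semigroup T) (hT0 : ∀ t, 0 ≤ t → 0 ≼ T t)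
    (hP : IsC0Semigroup P) (h : IsAbsorptionLimit T B R) (hPR : ∀ t, 0 ≤ t → P t ≼ R t) :
    IsC0Semigroup R := by
  obtain ⟨S, hS, hSR⟩ := h.exists_isPerturbation
  exact (IsSemigroup.of_tendstoStrongly (fun n => (hS n).1.1) hSR).isC0Semigroup_of_squeeze hP hT
    (h.nonneg hT hT0) hPR (h.opLE hT hT0)

theorem isPerturbation (hT : IsC0Semigroup T) (hT0 : ∀ t, 0 ≤ t → 0 ≼ T t)
    (h : IsAbsorptionLimit T B R) (h' : IsAbsorptionLimit T B' R') (hR : IsC0Semigroup R)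
    (hR' : IsC0Semigroup R') (hD : ∀ n, B n - B' n = D) : IsPerturbation R R' D := by
  obtain ⟨S, hS, hSR⟩ := h.exists_isPerturbation
  obtain ⟨S', hS', hSR'⟩ := h'.exists_isPerturbation
  refine .of_tendstoStrongly (fun n => (hS n).1) hR hR' ?_ ?_ hSR hSR' fun n => ?_
  · exact uniformlyLocallyBounded_of_opLE hT
      (fun n _ => (hS n).nonneg_of_isPositiveCentral hT hT0 (h.isPositiveCentral n))
      fun n _ => (hS n).opLE_of_isPositiveCentral hT hT0 (h.isPositiveCentral n)
  · exact uniformlyLocallyBounded_of_opLE hT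
      (fun n _ => (hS' n).nonneg_of_isPositiveCentral hT hT0 (h'.isPositiveCentral n))
      fun n _ => (hS' n).opLE_of_isPositiveCentral hT hT0 (h'.isPositiveCentral n)
  · simpa only [neg_neg, ← sub_eq_add_neg, hD] using ((hS n).symm hT).trans (hS' n)

end IsAbsorptionLimit

end Module

variable [CompleteSpace E]

theorem HasOrderContinuousNorm.exists_tendstoStrongly (hE : HasOrderContinuousNorm E)
    {R : ℕ → ℝ → E →L[ℝ] E} (hR : ∀ n m, n ≤ m → ∀ t, 0 ≤ t → R n t ≼ R m t)
    (hRT : ∀ n t, 0 ≤ t → R n t ≼ T t) : ∃ L, TendstoStrongly R L := by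
  have exists_of_nonneg : ∀ t, 0 ≤ t → ∀ f, 0 ≤ f → ∃ v, Tendsto (fun n => R n t f) atTop (𝓝 v) :=
    fun t ht f hf => hE (fun n m hnm => hR n m hnm t ht hf)
      ⟨T t f, Set.forall_mem_range.2 fun n => hRT n t ht hf⟩
  have exists_limit : ∀ t, 0 ≤ t → ∀ f, ∃ v, Tendsto (fun n => R n t f) atTop (𝓝 v) :=
    fun t ht f => by
      obtain ⟨v, hv⟩ := exists_of_nonneg t ht f⁺ (posPart_nonneg f)
      obtain ⟨w, hw⟩ := exists_of_nonneg t ht f⁻ (negPart_nonneg f)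
      exact ⟨v - w, by simpa only [← map_sub, posPart_sub_negPart] using hv.sub hw⟩
  choose! l hl using exists_limit
  have exists_operator : ∀ t, ∃ L : E →L[ℝ] E, 0 ≤ t →
      ∀ f, Tendsto (fun n => R n t f) atTop (𝓝 (L f)) := fun t => by
    by_cases ht : 0 ≤ t
    · exact ⟨continuousLinearMapOfTendsto (fun n => R n t) (tendsto_pi_nhds.2 (hl t ht)),
        fun _ => hl t ht⟩
    · exact ⟨0, fun h => absurd h ht⟩
  choose L hL using exists_operator
  exact ⟨L, hL⟩

theorem HasOrderContinuousNorm.exists_isC0Semigroup [HasSolidNorm E]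
    (hE : HasOrderContinuousNorm E) {R : ℕ → ℝ → E →L[ℝ] E} (hP : IsC0Semigroup P)
    (hT : IsC0Semigroup T) (hRsg : ∀ n, IsSemigroup (R n)) (hR0 : ∀ n t, 0 ≤ t → 0 ≼ R n t)
    (hPR : ∀ n t, 0 ≤ t → P t ≼ R n t) (hRT : ∀ n t, 0 ≤ t → R n t ≼ T t)
    (hR : ∀ n m, n ≤ m → ∀ t, 0 ≤ t → R n t ≼ R m t) :
    ∃ L, IsC0Semigroup L ∧ TendstoStrongly R L := by
  obtain ⟨L, hL⟩ := hE.exists_tendstoStrongly hR hRT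
  refine ⟨L, (IsSemigroup.of_tendstoStrongly hRsg hL).isC0Semigroup_of_squeeze hP hT
    (fun t ht => ?_) (fun t ht => ?_) fun t ht => ?_, hL⟩
  · exact opLE_of_tendsto (fun _ => tendsto_const_nhds) (hL t ht) fun n => hR0 n t ht
  · exact opLE_of_tendsto (fun _ => tendsto_const_nhds) (hL t ht) fun n => hPR n t ht
  · exact opLE_of_tendsto (hL t ht) (fun _ => tendsto_const_nhds) fun n => hRT n t ht

end Ordered
end BanachLattice

section Truncation

variable {Ω : Type*}

theorem trunc_nonneg (V : Ω → ℝ≥0∞) (n : ℕ) (ω : Ω) : 0 ≤ trunc V n ω := ENNReal.toReal_nonneg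

theorem trunc_le (V : Ω → ℝ≥0∞) (n : ℕ) (ω : Ω) : trunc V n ω ≤ n :=
  ENNReal.toReal_le_of_le_ofReal n.cast_nonneg (by simp)

theorem trunc_mono {V V' : Ω → ℝ≥0∞} (h : V ≤ V') (n : ℕ) (ω : Ω) : trunc V n ω ≤ trunc V' n ω :=
  ENNReal.toReal_mono (ne_top_of_le_ne_top (ENNReal.natCast_ne_top n) (min_le_right _ _))
    (min_le_min_right _ (h ω))

theorem resid_le (V : Ω → ℝ≥0∞) (n : ℕ) : resid V n ≤ V := fun _ => tsub_le_self

theorem resid_antitone (V : Ω → ℝ≥0∞) : Antitone (resid V) := fun _ _ h _ =>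
  tsub_le_tsub_left (min_le_min_left _ (Nat.cast_le.2 h)) _

theorem trunc_add_sub_trunc_resid (V : Ω → ℝ≥0∞) (m n : ℕ) (ω : Ω) :
    trunc V (m + n) ω - trunc (resid V n) m ω = trunc V n ω := by
  have hmin : min (V ω) (m + n) = min (V ω) n + min (V ω - min (V ω) n) m := by
    rcases le_total (V ω) n with h | h
    · rw [min_eq_left h, tsub_self, min_eq_left zero_le, add_zero,
        min_eq_left (h.trans le_add_self)]
    · rw [min_eq_right h, add_comm (m : ℝ≥0∞), ← min_add_add_left, add_tsub_cancel_of_le h]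
  have hne_top : ∀ (x : ℝ≥0∞) (k : ℕ), min x k ≠ ∞ := fun x k =>
    ne_top_of_le_ne_top (ENNReal.natCast_ne_top k) (min_le_right x k)
  rw [trunc, trunc, trunc, resid, Nat.cast_add, hmin,
    ENNReal.toReal_add (hne_top _ _) (hne_top _ _), add_sub_cancel_right]

end Truncation

section Lp

variable {Ω : Type*} [MeasurableSpace Ω] {μ : Measure Ω} {p : ℝ≥0∞}

instance {G : Type*} [NormedAddCommGroup G] [PartialOrder G] [IsOrderedAddMonoid G]
    [NormedSpace ℝ G] [IsOrderedModule ℝ G] : IsOrderedModule ℝ (Lp G p μ) where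
  smul_le_smul_of_nonneg_left a ha f g hfg := by
    rw [← Lp.coeFn_le] at hfg ⊢
    filter_upwards [hfg, Lp.coeFn_smul a f, Lp.coeFn_smul a g] with ω hω haf hag
    rw [haf, hag]
    exact smul_le_smul_of_nonneg_left hω ha
  smul_le_smul_of_nonneg_right f hf a b hab := by
    rw [← Lp.coeFn_nonneg] at hf
    rw [← Lp.coeFn_le]
    filter_upwards [hf, Lp.coeFn_smul a f, Lp.coeFn_smul b f] with ω hω haf hbf
    rw [haf, hbf]
    exact smul_le_smul_of_nonneg_right hab hω

theorem LocallyMeasurable.aemeasurable_restrict {α : Type*} [MeasurableSpace α] {W : Ω → α}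
    (hW : LocallyMeasurable μ W) {s : Set Ω} (hs : MeasurableSet s) [SigmaFinite (μ.restrict s)] :
    AEMeasurable W (μ.restrict s) := by
  rw [← Measure.restrict_univ (μ := μ.restrict s), ← iUnion_spanningSets (μ.restrict s),
    aemeasurable_iUnion_iff]
  intro i
  have hmeas := measurableSet_spanningSets (μ.restrict s) i
  rw [Measure.restrict_restrict hmeas]
  refine hW _ (hmeas.inter hs) ?_
  rw [← Measure.restrict_apply hmeas]
  exact measure_spanningSets_lt_top _ i

variable [Fact (1 ≤ p)]

theorem exponent_ne_zero : p ≠ 0 := (zero_lt_one.trans_le Fact.out).ne'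

-- A function in `L_p` vanishes outside a `σ`-finite set, on which `W` is a.e. measurable.
theorem LocallyMeasurable.aestronglyMeasurable_mul (hp : p ≠ ∞) {W : Ω → ℝ}
    (hW : LocallyMeasurable μ W) (f : Lp ℝ p μ) :
    AEStronglyMeasurable (fun ω => W ω * f ω) μ := by
  obtain ⟨s, hs, hfs, hσ⟩ :=
    (Lp.finStronglyMeasurable f exponent_ne_zero hp).exists_set_sigmaFinite
  have hindicator : (fun ω => W ω * f ω) = s.indicator (fun ω => W ω * f ω) :=
    (Set.indicator_eq_self.2 fun ω hω => by_contra fun h => hω (by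
      simp only [hfs ω h, mul_zero])).symm
  rw [hindicator, aestronglyMeasurable_indicator_iff hs]
  exact (hW.aemeasurable_restrict hs).aestronglyMeasurable.mul (Lp.aestronglyMeasurable f).restrict

theorem norm_rpow_eq_integral {G : Type*} [NormedAddCommGroup G] (hp : p ≠ ∞) (f : Lp G p μ) :
    ‖f‖ ^ p.toReal = ∫ ω, ‖f ω‖ ^ p.toReal ∂μ := by
  have hq : p.toReal ≠ 0 := (ENNReal.toReal_pos exponent_ne_zero hp).ne'
  have hint : 0 ≤ ∫ ω, ‖f ω‖ ^ p.toReal ∂μ := integral_nonneg fun ω => by positivity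
  rw [Lp.norm_def, (Lp.memLp f).eLpNorm_eq_integral_rpow_norm exponent_ne_zero hp,
    ENNReal.toReal_ofReal (Real.rpow_nonneg hint _), Real.rpow_inv_rpow hint hq]

theorem norm_rpow_add_norm_rpow_le (hp : p ≠ ∞) {f g : Lp ℝ p μ} (hf : 0 ≤ f) (hg : 0 ≤ g) :
    ‖f‖ ^ p.toReal + ‖g‖ ^ p.toReal ≤ ‖f + g‖ ^ p.toReal := by
  have hq : 1 ≤ p.toReal := by simpa using ENNReal.toReal_mono hp (Fact.out : 1 ≤ p)
  have hint : ∀ h : Lp ℝ p μ, Integrable (fun ω => ‖h ω‖ ^ p.toReal) μ := fun h =>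
    (Lp.memLp h).integrable_norm_rpow exponent_ne_zero hp
  rw [← Lp.coeFn_nonneg] at hf hg
  rw [norm_rpow_eq_integral hp, norm_rpow_eq_integral hp, norm_rpow_eq_integral hp,
    ← integral_add (hint f) (hint g)]
  refine integral_mono_ae ((hint f).add (hint g)) (hint (f + g)) ?_
  filter_upwards [hf, hg, Lp.coeFn_add f g] with ω (hfω : 0 ≤ f ω) (hgω : 0 ≤ g ω) hadd
  simp only [hadd, Pi.add_apply, Real.norm_of_nonneg hfω, Real.norm_of_nonneg hgω,
    Real.norm_of_nonneg (add_nonneg hfω hgω)]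
  exact Real.add_rpow_le_rpow_add hfω hgω hq

theorem hasOrderContinuousNorm_Lp (hp : p ≠ ∞) : HasOrderContinuousNorm (Lp ℝ p μ) :=
  hasOrderContinuousNorm_of_superadditive (ENNReal.toReal_pos exponent_ne_zero hp)
    fun _ _ => norm_rpow_add_norm_rpow_le hp

/-- `B` is the operator on `L_p` of multiplication by the function `W`. -/
def IsMulOp (W : Ω → ℝ) (B : Lp ℝ p μ →L[ℝ] Lp ℝ p μ) : Prop :=
  ∀ f : Lp ℝ p μ, ⇑(B f) =ᵐ[μ] fun ω => W ω * f ω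

theorem LocallyMeasurable.exists_isMulOp (hp : p ≠ ∞) {W : Ω → ℝ} (hW : LocallyMeasurable μ W)
    {C : ℝ} (hC : ∀ ω, ‖W ω‖ ≤ C) : ∃ B : Lp ℝ p μ →L[ℝ] Lp ℝ p μ, IsMulOp W B := by
  have hbound : ∀ (f : Lp ℝ p μ) ω, ‖W ω * f ω‖ ≤ C * ‖f ω‖ := fun f ω => by
    rw [norm_mul]
    exact mul_le_mul_of_nonneg_right (hC ω) (norm_nonneg _)
  have hmem : ∀ f : Lp ℝ p μ, MemLp (fun ω => W ω * f ω) p μ := fun f =>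
    (Lp.memLp f).of_le_mul (hW.aestronglyMeasurable_mul hp f) (.of_forall (hbound f))
  let mulOp : Lp ℝ p μ →ₗ[ℝ] Lp ℝ p μ :=
    { toFun := fun f => (hmem f).toLp _
      map_add' := fun f g => by
        rw [← MemLp.toLp_add, MemLp.toLp_eq_toLp_iff]
        filter_upwards [Lp.coeFn_add f g] with ω hadd
        simp only [hadd, Pi.add_apply, mul_add]
      map_smul' := fun c f => by
        rw [RingHom.id_apply, ← MemLp.toLp_const_smul, MemLp.toLp_eq_toLp_iff]
        filter_upwards [Lp.coeFn_smul c f] with ω hsmul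
        simp only [hsmul, Pi.smul_apply, smul_eq_mul, mul_left_comm] }
  refine ⟨mulOp.mkContinuous C fun f => Lp.norm_le_mul_norm_of_ae_le_mul ?_,
    fun f => (hmem f).coeFn_toLp⟩
  filter_upwards [(hmem f).coeFn_toLp] with ω hω
  exact hω ▸ hbound f ω

namespace IsMulOp

variable {W W' : Ω → ℝ} {B B' : Lp ℝ p μ →L[ℝ] Lp ℝ p μ}

theorem unique (h : IsMulOp W B) (h' : IsMulOp W B') : B = B' :=
  ContinuousLinearMap.ext fun f => Lp.ext ((h f).trans (h' f).symm)

theorem sub (h : IsMulOp W B) (h' : IsMulOp W' B') :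
    IsMulOp (fun ω => W ω - W' ω) (B - B') := fun f => by
  filter_upwards [h f, h' f, Lp.coeFn_sub (B f) (B' f)] with ω hω hω' hsub
  rw [sub_apply, hsub, Pi.sub_apply, hω, hω', sub_mul]

theorem neg (h : IsMulOp W B) : IsMulOp (fun ω => -W ω) (-B) := fun f => by
  filter_upwards [h f, Lp.coeFn_neg (B f)] with ω hω hneg
  rw [neg_apply, hneg, Pi.neg_apply, hω, neg_mul]

theorem const (c : ℝ) :
    IsMulOp (fun _ => c) (c • ContinuousLinearMap.id ℝ (Lp ℝ p μ)) := fun f =>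
  Lp.coeFn_smul c f

theorem opLE (h : IsMulOp W B) (h' : IsMulOp W' B') (hWW' : ∀ ω, W ω ≤ W' ω) : OpLE B B' :=
  fun f hf => by
    rw [← Lp.coeFn_nonneg] at hf
    rw [← Lp.coeFn_le]
    filter_upwards [hf, h f, h' f] with ω hfω hω hω'
    rw [hω, hω']
    exact mul_le_mul_of_nonneg_right (hWW' ω) hfω

theorem isPositiveCentral (h : IsMulOp W B) {c : ℝ} (hW : ∀ ω, 0 ≤ W ω) (hWc : ∀ ω, W ω ≤ c) :
    IsPositiveCentral B :=
  ⟨by simpa using (const 0).opLE h hW, c, h.opLE (const c) hWc⟩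

theorem isPerturbedSG_iff (h : IsMulOp W B) {T S : ℝ → Lp ℝ p μ →L[ℝ] Lp ℝ p μ} :
    IsPerturbedSG μ p T S W ↔ IsPerturbation T S (-B) := by
  have eq_iff : ∀ f g g₀ : Lp ℝ p μ,
      (⇑g =ᵐ[μ] fun ω => g₀ ω - W ω * f ω) ↔ g₀ = g - (-B) f := fun f g g₀ => by
    have hsub : ⇑(g₀ - B f) =ᵐ[μ] fun ω => g₀ ω - W ω * f ω :=
      (Lp.coeFn_sub g₀ (B f)).trans ((EventuallyEq.refl _ _).sub (h f))
    calc (⇑g =ᵐ[μ] fun ω => g₀ ω - W ω * f ω) ↔ ⇑g =ᵐ[μ] ⇑(g₀ - B f) :=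
          ⟨fun hg => hg.trans hsub.symm, fun hg => hg.trans hsub⟩
      _ ↔ g = g₀ - B f := Lp.ext_iff.symm
      _ ↔ g₀ = g - (-B) f := by rw [neg_apply, sub_neg_eq_add, eq_sub_iff_add_eq, eq_comm]
  refine and_congr_right fun _ => forall₂_congr fun f g => ?_
  simp only [eq_iff, exists_eq_right]

end IsMulOp

variable {V : Ω → ℝ≥0∞}

theorem LocallyMeasurable.trunc (hV : LocallyMeasurable μ V) (n : ℕ) :
    LocallyMeasurable μ (trunc V n) := fun s hs hμs => by
  obtain ⟨g, hg, hVg⟩ := hV s hs hμs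
  refine ⟨Absorption.trunc g n, (hg.min measurable_const).ennreal_toReal, ?_⟩
  filter_upwards [hVg] with ω hω
  simp only [Absorption.trunc, hω]

theorem LocallyMeasurable.resid (hV : LocallyMeasurable μ V) (n : ℕ) :
    LocallyMeasurable μ (resid V n) := fun s hs hμs => by
  obtain ⟨g, hg, hVg⟩ := hV s hs hμs
  refine ⟨Absorption.resid g n, hg.sub (hg.min measurable_const), ?_⟩
  filter_upwards [hVg] with ω hω
  simp only [Absorption.resid, hω]

theorem LocallyMeasurable.exists_isMulOp_trunc (hp : p ≠ ∞) (hV : LocallyMeasurable μ V) :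
    ∃ B : ℕ → Lp ℝ p μ →L[ℝ] Lp ℝ p μ, ∀ n, IsMulOp (Absorption.trunc V n) (B n) := by
  choose B hB using fun n => (hV.trunc n).exists_isMulOp (p := p) hp fun ω =>
    (Real.norm_of_nonneg (trunc_nonneg V n ω)).trans_le (trunc_le V n ω)
  exact ⟨B, hB⟩

theorem IsAbsorptionSG.isAbsorptionLimit {T R : ℝ → Lp ℝ p μ →L[ℝ] Lp ℝ p μ}
    {B : ℕ → Lp ℝ p μ →L[ℝ] Lp ℝ p μ} (h : IsAbsorptionSG μ p T V R)
    (hB : ∀ n, IsMulOp (trunc V n) (B n)) : IsAbsorptionLimit T B R where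
  isPositiveCentral n := (hB n).isPositiveCentral (trunc_nonneg V n) (trunc_le V n)
  exists_isPerturbation := by
    obtain ⟨S, hS, hSR⟩ := h
    exact ⟨S, fun n => (hB n).isPerturbedSG_iff.1 (hS n), hSR⟩

end Lp
end Absorption

/-- If `V : Ω → [0,∞]` is `T`-admissible, then the strong limit
`s-lim_{n→∞} T_{V−V∧n}` always exists and equals `(T_V)_{−V}`, the `C₀`-semigroup obtained
from `T_V` by applying `−V` as a perturbation (i.e. `s-lim_{n→∞} e^{t(A_V + V∧n)}`). -/
theorem statement16
    {Ω : Type*} [MeasurableSpace Ω] (μ : Measure Ω) (p : ℝ≥0∞) [Fact (1 ≤ p)] (hp : p ≠ ∞)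
    (T : ℝ → Lp ℝ p μ →L[ℝ] Lp ℝ p μ)
    (hT : IsC0Semigroup T) (hTpos : IsPositiveSG T)
    (V : Ω → ℝ≥0∞) (hVmeas : LocallyMeasurable μ V)
    -- the absorption semigroup `T_V`, a `C₀`-semigroup (`V` is `T`-admissible)
    (TV : ℝ → Lp ℝ p μ →L[ℝ] Lp ℝ p μ)
    (hTV : IsAbsorptionSG μ p T V TV) (hTVC0 : IsC0Semigroup TV)
    -- the absorption semigroups `T_{V − V∧n}`
    (R : ℕ → ℝ → Lp ℝ p μ →L[ℝ] Lp ℝ p μ)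
    (hR : ∀ n : ℕ, IsAbsorptionSG μ p T (resid V n) (R n)) :
    ∃ L : ℝ → Lp ℝ p μ →L[ℝ] Lp ℝ p μ,
      -- the strong limit `s-lim_{n→∞} T_{V−V∧n}` exists …
      (∀ t : ℝ, 0 ≤ t → ∀ f : Lp ℝ p μ,
        Tendsto (fun n : ℕ => R n t f) atTop (𝓝 (L t f))) ∧
      -- … and is a `C₀`-semigroup, namely `(T_V)_{−V}`,
      IsC0Semigroup L ∧
      -- the semigroup obtained from `T_V` by the perturbation `−V`
      (∃ U : ℕ → ℝ → Lp ℝ p μ →L[ℝ] Lp ℝ p μ,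
        (∀ n : ℕ, IsPerturbedSG μ p TV (U n) (fun ω => -(trunc V n ω))) ∧
        ∀ t : ℝ, 0 ≤ t → ∀ f : Lp ℝ p μ,
          Tendsto (fun n : ℕ => U n t f) atTop (𝓝 (L t f))) := by
  obtain ⟨B, hB⟩ := hVmeas.exists_isMulOp_trunc (p := p) hp
  choose B' hB' using fun n => (hVmeas.resid n).exists_isMulOp_trunc (p := p) hp
  have hTVlim : IsAbsorptionLimit T B TV := hTV.isAbsorptionLimit hB
  have hRlim : ∀ n, IsAbsorptionLimit T (B' n) (R n) := fun n => (hR n).isAbsorptionLimit (hB' n)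
  have hTVR : ∀ n t, 0 ≤ t → OpLE (TV t) (R n t) := fun n =>
    hTVlim.antitone hT hTpos (hRlim n) fun m => (hB' n m).opLE (hB m) (trunc_mono (resid_le V n) m)
  have hRmono : ∀ n m, n ≤ m → ∀ t, 0 ≤ t → OpLE (R n t) (R m t) := fun n m hnm =>
    (hRlim n).antitone hT hTpos (hRlim m) fun k =>
      (hB' m k).opLE (hB' n k) (trunc_mono (resid_antitone V hnm) k)
  have hRC0 : ∀ n, IsC0Semigroup (R n) := fun n =>
    (hRlim n).isC0Semigroup hT hTpos hTVC0 (hTVR n)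
  have hRpert : ∀ n, IsPerturbation TV (R n) (B n) := fun n =>
    (hTVlim.comp_add n).isPerturbation hT hTpos (hRlim n) hTVC0 (hRC0 n) fun m =>
      ((hB (m + n)).sub (hB' n m)).unique
        (by simpa only [trunc_add_sub_trunc_resid] using hB n)
  obtain ⟨L, hLC0, hL⟩ := (hasOrderContinuousNorm_Lp hp).exists_isC0Semigroup hTVC0 hT
    (fun n => (hRC0 n).1) (fun n => (hRlim n).nonneg hT hTpos) hTVR
    (fun n => (hRlim n).opLE hT hTpos) hRmono
  exact ⟨L, hL, hLC0, R, fun n =>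
    (hB n).neg.isPerturbedSG_iff.2 ((neg_neg (B n)).symm ▸ hRpert n), hL⟩
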